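/- Let r ≥ 4 be an integer, and let f ∈ L^r_{∞,∞} be non-constant. Set α = M_r(f) and b = √(2·M_{r−2}(f)/M_r(f)), and for β ≥ 0 let g_β = α·ψ_r(0,b,β). Then α, b > 0, and for every β ≥ 0 one has M_{r−2}(g_β) = M_{r−2}(f) and M_r(g_β) = M_r(f); moreover, for every integer s with 0 ≤ s < r−2, the function β ↦ M_s(g_β) is continuous, increasing, and tends to ∞ as β → ∞. -/

import Mathlib

open MeasureTheory Filter

noncomputable section

/-- The uniform norm `‖f‖ = sup_{t ∈ ℝ} |f t|` of a function `f : ℝ → ℝ`. -/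
def unif (f : ℝ → ℝ) : ℝ := ⨆ t : ℝ, |f t|

/-- `M k f = ‖f⁽ᵏ⁾‖`, the uniform norm of the `k`-th derivative of `f`. -/
def M (k : ℕ) (f : ℝ → ℝ) : ℝ := unif (iteratedDeriv k f)

/-- The class `L^r_{∞,∞}`: bounded functions `f : ℝ → ℝ` having `r-1` (continuous)
derivatives, with `f⁽ʳ⁻¹⁾` locally absolutely continuous and `f⁽ʳ⁾` essentially bounded;
the last two conditions are equivalent to `f⁽ʳ⁻¹⁾` being Lipschitz. -/
def MemL (r : ℕ) (f : ℝ → ℝ) : Prop :=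
  Continuous f ∧ (∃ C : ℝ, ∀ t : ℝ, |f t| ≤ C) ∧ ContDiff ℝ (r - 1 : ℕ) f ∧
    ∃ K : NNReal, LipschitzWith K (iteratedDeriv (r - 1) f)

/-- The Euler perfect spline `φ_r`: the `r`-th `2π`-periodic antiderivative with zero
mean value of `t ↦ sgn (sin t)`. -/
def eulerPhi : ℕ → ℝ → ℝ
  | 0 => fun t => Real.sign (Real.sin t)
  | (s + 1) => fun t =>
      (∫ x in (0:ℝ)..t, eulerPhi s x) -
        (1 / (2 * Real.pi)) * ∫ x in (0:ℝ)..(2 * Real.pi), ∫ u in (0:ℝ)..x, eulerPhi s u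

/-- `φ_{λ,r}(t) = λ^{-r} φ_r (λ t)`. -/
def eulerPhiL (lam : ℝ) (r : ℕ) (t : ℝ) : ℝ := lam ^ (-(r : ℤ)) * eulerPhi r (lam * t)

/-- The basic step function: `0` on `[0,a]`, `1` on `(a, a+b]`, `0` after `a+b`. -/
def psiBase (a b : ℝ) (t : ℝ) : ℝ := if t ≤ a then 0 else if t ≤ a + b then 1 else 0

/-- `psiBase` continued evenly with respect to the point `a+b+c`. -/
def psiHalf (a b c t : ℝ) : ℝ :=
  if t ≤ a + b + c then psiBase a b t else psiBase a b (2 * (a + b + c) - t)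

/-- The Rodov step function `ψ_0(a,b,c)`: equal to `psiBase` on `[0, a+b+c]`, continued
evenly with respect to `a+b+c`, then oddly with respect to `2(a+b+c)`, then
`4(a+b+c)`-periodically. -/
def psiZero (a b c t : ℝ) : ℝ :=
  if (t - 4 * (a + b + c) * ⌊t / (4 * (a + b + c))⌋) ≤ 2 * (a + b + c) then
    psiHalf a b c (t - 4 * (a + b + c) * ⌊t / (4 * (a + b + c))⌋)
  else
    -psiHalf a b c (4 * (a + b + c) - (t - 4 * (a + b + c) * ⌊t / (4 * (a + b + c))⌋))

/-- `ψ_s(a,b,c)`: the `s`-th periodic antiderivative of `ψ_0(a,b,c)` with zero mean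
value over the period `[0, 4(a+b+c)]`. -/
def psi : ℕ → ℝ → ℝ → ℝ → ℝ → ℝ
  | 0 => psiZero
  | (s + 1) => fun a b c t =>
      (∫ x in (0:ℝ)..t, psi s a b c x) -
        (1 / (4 * (a + b + c))) *
          ∫ x in (0:ℝ)..(4 * (a + b + c)), ∫ u in (0:ℝ)..x, psi s a b c u

/-- The modulus of continuity `ω(D^k, X; δ) = sup {‖f⁽ᵏ⁾‖ : f ∈ X, ‖f‖ ≤ δ}` of the
differentiation operator `D^k` on a class `X`. -/
def omegaMod (k : ℕ) (X : Set (ℝ → ℝ)) (δ : ℝ) : ℝ :=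
  sSup {y : ℝ | ∃ f ∈ X, M 0 f ≤ δ ∧ M k f = y}

end

/-!
Positivity of `M k f` for `k ≤ r`: the intermediate derivatives of `f` are bounded, and a bounded
function with constant derivative is constant, so non-constancy passes from `f` to its derivatives.

For the splines, put `L = b + c`. The `2L`-antiperiodicity and alternating parity of `ψ_n(0,b,c)`
reduce it to the quarter period `[0, L]`, where `ψ_{n+2}` is, up to sign and the reflection
`t ↦ L - t`, the increasing function `U_n` with `U_0 t = ∫₀ᵗ max (b - x) 0` and
`U_{n+1} t = ∫₀ᵗ U_n (L - x)`. Its norm is therefore `U_n L`. This equals `b² / 2` for `n = 0`,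
whatever `L` is; for `n ≥ 1`, enlarging `L` enlarges both the integrand and the interval, and
`U_n L` grows at least linearly in `L`.
-/

lemma unif_eq_of_forall_abs_le {f : ℝ → ℝ} {B t₀ : ℝ} (hB : ∀ t, |f t| ≤ B) (ht₀ : |f t₀| = B) :
    unif f = B :=
  IsGreatest.csSup_eq ⟨⟨t₀, ht₀⟩, Set.forall_mem_range.2 hB⟩

lemma unif_pos {f : ℝ → ℝ} {B t₀ : ℝ} (hB : ∀ t, |f t| ≤ B) (ht₀ : f t₀ ≠ 0) : 0 < unif f :=
  (abs_pos.2 ht₀).trans_le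
    (le_ciSup (f := fun t => |f t|) ⟨B, Set.forall_mem_range.2 hB⟩ t₀)

lemma M_const_mul {α : ℝ} (hα : 0 ≤ α) (k : ℕ) (f : ℝ → ℝ) :
    M k (fun t => α * f t) = α * M k f := by
  simp only [M, unif, iteratedDeriv_const_mul_field, abs_mul, abs_of_nonneg hα,
    Real.mul_iSup_of_nonneg hα]

/-! ### Bounds on intermediate derivatives -/

/-- `f` varies by at most `K` over distances at most `1`. This coarse substitute for a Lipschitz
bound passes to unit increments `x ↦ f (x + 1) - f x` and needs no differentiability. -/
def UnitOscLE (K : ℝ) (f : ℝ → ℝ) : Prop := ∀ x y, |x - y| ≤ 1 → |f x - f y| ≤ K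

lemma unitOscLE_of_lipschitzWith {K : NNReal} {f : ℝ → ℝ} (hf : LipschitzWith K f) :
    UnitOscLE K f := fun x y hxy =>
  (hf.dist_le_mul x y).trans (mul_le_of_le_one_right K.2 hxy)

lemma unitOscLE_of_hasDerivAt {f f' : ℝ → ℝ} {B : ℝ} (hf : ∀ x, HasDerivAt f (f' x) x)
    (hB : ∀ x, |f' x| ≤ B) : UnitOscLE B f := fun x y hxy =>
  calc |f x - f y|
      ≤ B * |x - y| := convex_univ.norm_image_sub_le_of_norm_hasDerivWithin_le
        (fun z _ => (hf z).hasDerivWithinAt) (fun z _ => hB z) (Set.mem_univ y) (Set.mem_univ x)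
    _ ≤ B := mul_le_of_le_one_right ((abs_nonneg _).trans (hB 0)) hxy

lemma abs_unit_increment_sub_deriv_le {f f' : ℝ → ℝ} {K : ℝ} (hf : ∀ x, HasDerivAt f (f' x) x)
    (hK : UnitOscLE K f') (x : ℝ) : |f (x + 1) - f x - f' x| ≤ K := by
  have hderiv (t : ℝ) : HasDerivAt (fun t => f t - f' x * t) (f' t - f' x) t := by
    simpa using (hf t).fun_sub ((hasDerivAt_id t).const_mul (f' x))
  have hbound (t : ℝ) (ht : t ∈ Set.Icc x (x + 1)) : ‖f' t - f' x‖ ≤ K :=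
    hK t x (abs_le.2 ⟨by linarith [ht.1], by linarith [ht.2]⟩)
  have hmv := (convex_Icc x (x + 1)).norm_image_sub_le_of_norm_hasDerivWithin_le
    (fun t _ => (hderiv t).hasDerivWithinAt) hbound
    (Set.left_mem_Icc.2 (by linarith)) (Set.right_mem_Icc.2 (by linarith))
  calc |f (x + 1) - f x - f' x| = |f (x + 1) - f' x * (x + 1) - (f x - f' x * x)| := by ring_nf
    _ ≤ K * |x + 1 - x| := hmv
    _ = K := by simp

lemma UnitOscLE.of_abs_sub_le {f g : ℝ → ℝ} {K D : ℝ} (hg : UnitOscLE K g)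
    (hfg : ∀ x, |f x - g x| ≤ D) : UnitOscLE (D + K + D) f := fun x y hxy =>
  calc |f x - f y| = |(f x - g x) + (g x - g y) + (g y - f y)| := by ring_nf
    _ ≤ |f x - g x| + |g x - g y| + |g y - f y| := abs_add_three _ _ _
    _ ≤ D + K + D := add_le_add_three (hfg x) (hg x y hxy) (abs_sub_comm (f y) (g y) ▸ hfg y)

lemma hasDerivAt_iteratedDeriv {f : ℝ → ℝ} {n k : ℕ} (hf : ContDiff ℝ n f) (hk : k < n) (x : ℝ) :
    HasDerivAt (iteratedDeriv k f) (iteratedDeriv (k + 1) f x) x := by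
  rw [iteratedDeriv_succ]
  exact (hf.differentiable_iteratedDeriv k (mod_cast hk) x).hasDerivAt

-- Induction on `n` through the unit increment `Δf`: by the mean value inequality `(Δf)⁽ⁿ⁾` stays
-- within `K` of `f⁽ⁿ⁺¹⁾`, so it inherits a bound on its oscillation and is bounded by induction.
lemma exists_abs_iteratedDeriv_le_of_unitOscLE {f : ℝ → ℝ} {n : ℕ} {C K : ℝ}
    (hf : ContDiff ℝ n f) (hC : ∀ x, |f x| ≤ C) (hK : UnitOscLE K (iteratedDeriv n f)) :
    ∃ B, ∀ x, |iteratedDeriv n f x| ≤ B := by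
  induction n generalizing f C K with
  | zero => exact ⟨C, by simpa using hC⟩
  | succ n ih =>
    set Δ : ℝ → ℝ := fun x => f (x + 1) - f x
    have hfn : ContDiff ℝ n f := hf.of_le (mod_cast n.le_succ)
    have hshift : ContDiff ℝ n (fun x => f (x + 1)) := hfn.comp (contDiff_id.add contDiff_const)
    have hΔC (x : ℝ) : |Δ x| ≤ C + C := (abs_sub _ _).trans (add_le_add (hC _) (hC _))
    have hΔn (x : ℝ) : iteratedDeriv n Δ x = iteratedDeriv n f (x + 1) - iteratedDeriv n f x := by
      rw [iteratedDeriv_fun_sub hshift.contDiffAt hfn.contDiffAt, iteratedDeriv_comp_add_const]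
    have hclose (x : ℝ) : |iteratedDeriv n Δ x - iteratedDeriv (n + 1) f x| ≤ K :=
      hΔn x ▸ abs_unit_increment_sub_deriv_le (hasDerivAt_iteratedDeriv hf n.lt_succ_self) hK x
    obtain ⟨B, hB⟩ := ih (hshift.sub hfn) hΔC (hK.of_abs_sub_le hclose)
    refine ⟨B + K, fun x => ?_⟩
    calc |iteratedDeriv (n + 1) f x|
        = |iteratedDeriv n Δ x - (iteratedDeriv n Δ x - iteratedDeriv (n + 1) f x)| := by ring_nf
      _ ≤ |iteratedDeriv n Δ x| + |iteratedDeriv n Δ x - iteratedDeriv (n + 1) f x| := abs_sub _ _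
      _ ≤ B + K := add_le_add (hB x) (hclose x)

lemma exists_abs_iteratedDeriv_le_of_le {f : ℝ → ℝ} {n k : ℕ} {C K : ℝ}
    (hf : ContDiff ℝ n f) (hC : ∀ x, |f x| ≤ C) (hK : UnitOscLE K (iteratedDeriv n f))
    (hk : k ≤ n) : ∃ B, ∀ x, |iteratedDeriv k f x| ≤ B := by
  induction hk using Nat.decreasingInduction with
  | self => exact exists_abs_iteratedDeriv_le_of_unitOscLE hf hC hK
  | of_succ k hk ih =>
    obtain ⟨B, hB⟩ := ih
    exact exists_abs_iteratedDeriv_le_of_unitOscLE (hf.of_le (mod_cast hk.le)) hC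
      (unitOscLE_of_hasDerivAt (hasDerivAt_iteratedDeriv hf hk) hB)

lemma eq_of_hasDerivAt_const_of_bounded {f : ℝ → ℝ} {c B : ℝ} (hf : ∀ x, HasDerivAt f c x)
    (hB : ∀ x, |f x| ≤ B) (x y : ℝ) : f x = f y := by
  have haffine (x : ℝ) : f x = f 0 + c * x := by
    have hderiv (x : ℝ) : HasDerivAt (fun t => f t - c * t) 0 x := by
      simpa using (hf x).fun_sub ((hasDerivAt_id x).const_mul c)
    have := is_const_of_deriv_eq_zero (fun x => (hderiv x).differentiableAt)
      (fun x => (hderiv x).deriv) x 0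
    linarith
  have hc : c = 0 := by
    by_contra hc
    have hfar := haffine ((2 * B + 1) / c)
    rw [mul_div_cancel₀ _ hc] at hfar
    linarith [le_of_abs_le (hB ((2 * B + 1) / c)), neg_le_of_abs_le (hB 0)]
  rw [haffine x, haffine y, hc, zero_mul, zero_mul]

lemma exists_iteratedDeriv_ne {f : ℝ → ℝ} {n k : ℕ} (hf : ContDiff ℝ n f)
    (hB : ∀ k < n, ∃ B, ∀ x, |iteratedDeriv k f x| ≤ B) (hne : ∃ x y, f x ≠ f y) (hk : k ≤ n) :
    ∃ x y, iteratedDeriv k f x ≠ iteratedDeriv k f y := by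
  induction k with
  | zero => simpa using hne
  | succ k ih =>
    obtain ⟨x, y, hxy⟩ := ih (by omega)
    obtain ⟨B, hB⟩ := hB k hk
    by_contra! hconst
    exact hxy (eq_of_hasDerivAt_const_of_bounded
      (fun z => hconst z 0 ▸ hasDerivAt_iteratedDeriv hf hk z) hB x y)

-- `deriv f` takes the junk value `0` where `f` is not differentiable, so vanishing of `deriv f`
-- only says something through the almost everywhere differentiability of `f`.
lemma exists_deriv_ne_zero_of_lipschitzWith {f : ℝ → ℝ} {K : NNReal} (hf : LipschitzWith K f)
    (hne : ∃ x y, f x ≠ f y) : ∃ x, deriv f x ≠ 0 := by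
  by_contra! hzero
  obtain ⟨x, y, hxy⟩ := hne
  have hint := (hf.lipschitzOnWith (s := Set.uIcc x y)).absolutelyContinuousOnInterval
    |>.integral_deriv_eq_sub
  simp only [hzero, intervalIntegral.integral_zero] at hint
  exact hxy (by linarith)

lemma MemL.exists_abs_iteratedDeriv_le {r k : ℕ} {f : ℝ → ℝ} (hf : MemL r f) (hk : k ≤ r - 1) :
    ∃ B, ∀ x, |iteratedDeriv k f x| ≤ B := by
  obtain ⟨-, ⟨C, hC⟩, hcd, K, hK⟩ := hf
  exact exists_abs_iteratedDeriv_le_of_le hcd hC (unitOscLE_of_lipschitzWith hK) hk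

lemma MemL.exists_iteratedDeriv_ne {r k : ℕ} {f : ℝ → ℝ} (hf : MemL r f)
    (hne : ∃ x y, f x ≠ f y) (hk : k ≤ r - 1) :
    ∃ x y, iteratedDeriv k f x ≠ iteratedDeriv k f y :=
  _root_.exists_iteratedDeriv_ne hf.2.2.1 (fun _ hj => hf.exists_abs_iteratedDeriv_le hj.le) hne hk

lemma MemL.M_pos_of_le_pred {r k : ℕ} {f : ℝ → ℝ} (hf : MemL r f) (hne : ∃ x y, f x ≠ f y)
    (hk : k ≤ r - 1) : 0 < M k f := by
  obtain ⟨B, hB⟩ := hf.exists_abs_iteratedDeriv_le hk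
  obtain ⟨x, y, hxy⟩ := hf.exists_iteratedDeriv_ne hne hk
  by_cases hx : iteratedDeriv k f x = 0
  · exact unif_pos hB (t₀ := y) fun hy => hxy (hx.trans hy.symm)
  · exact unif_pos hB hx

lemma MemL.M_pos {r k : ℕ} {f : ℝ → ℝ} (hf : MemL r f) (hne : ∃ x y, f x ≠ f y) (hk : k ≤ r) :
    0 < M k f := by
  by_cases hk' : k ≤ r - 1
  · exact hf.M_pos_of_le_pred hne hk'
  obtain ⟨n, rfl⟩ : ∃ n, k = n + 1 := ⟨k - 1, by omega⟩
  obtain rfl : r = n + 1 := by omega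
  obtain ⟨-, -, -, K, hK⟩ := id hf
  obtain ⟨x, hx⟩ := exists_deriv_ne_zero_of_lipschitzWith hK (hf.exists_iteratedDeriv_ne hne le_rfl)
  rw [M, iteratedDeriv_succ]
  exact unif_pos (fun t => norm_deriv_le_of_lipschitz hK) hx

/-! ### Quarter waves -/

/-- The shape of `|ψ_{n+2}(0,b,c)|` on a quarter period `[0, L]`, `L = b + c`. For odd `n` the
argument is reflected to `L - t`, so that every quarter wave vanishes at `0` and increases;
this is why the recursion integrates the reflection of the previous wave. -/
noncomputable def quarterWave (b : ℝ) : ℕ → ℝ → ℝ → ℝ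
  | 0 => fun _ t => ∫ x in (0 : ℝ)..t, max (b - x) 0
  | n + 1 => fun L t => ∫ x in (0 : ℝ)..t, quarterWave b n L (L - x)

section QuarterWave

variable {b L : ℝ}

lemma continuous_quarterWave_uncurry (b : ℝ) (n : ℕ) :
    Continuous fun p : ℝ × ℝ => quarterWave b n p.1 p.2 := by
  induction n with
  | zero =>
    exact intervalIntegral.continuous_parametric_intervalIntegral_of_continuous
      (f := fun (_ : ℝ × ℝ) x => max (b - x) 0) (by fun_prop) continuous_snd
  | succ n ih =>
    exact intervalIntegral.continuous_parametric_intervalIntegral_of_continuous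
      (f := fun (p : ℝ × ℝ) x => quarterWave b n p.1 (p.1 - x))
      (ih.comp (f := fun q : (ℝ × ℝ) × ℝ => (q.1.1, q.1.1 - q.2)) (by fun_prop)) continuous_snd

lemma continuous_quarterWave_self (b : ℝ) (n : ℕ) : Continuous fun L => quarterWave b n L L :=
  (continuous_quarterWave_uncurry b n).comp (f := fun L => (L, L)) (by fun_prop)

lemma continuous_quarterWave_reflect (b : ℝ) (n : ℕ) (L : ℝ) :
    Continuous fun x => quarterWave b n L (L - x) :=
  (continuous_quarterWave_uncurry b n).comp (f := fun x => (L, L - x)) (by fun_prop)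

lemma quarterWave_nonneg (n : ℕ) {t : ℝ} (ht : t ∈ Set.Icc 0 L) : 0 ≤ quarterWave b n L t := by
  induction n generalizing t with
  | zero => exact intervalIntegral.integral_nonneg ht.1 fun x _ => le_max_right _ _
  | succ n ih =>
    exact intervalIntegral.integral_nonneg ht.1 fun x hx =>
      ih ⟨by linarith [hx.2, ht.2], by linarith [hx.1]⟩

lemma quarterWave_reflect_nonneg (n : ℕ) {x : ℝ} (hx : x ∈ Set.Icc 0 L) :
    0 ≤ quarterWave b n L (L - x) :=
  quarterWave_nonneg n ⟨sub_nonneg.2 hx.2, sub_le_self L hx.1⟩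

lemma quarterWave_pos (hb : 0 < b) (n : ℕ) {t : ℝ} (ht : t ∈ Set.Ioc 0 L) :
    0 < quarterWave b n L t := by
  induction n generalizing t with
  | zero =>
    exact intervalIntegral.integral_pos ht.1 (by fun_prop) (fun x _ => le_max_right _ _)
      ⟨0, ⟨le_rfl, ht.1.le⟩, by simpa using hb⟩
  | succ n ih =>
    exact intervalIntegral.integral_pos ht.1 (continuous_quarterWave_reflect b n L).continuousOn
      (fun x hx => quarterWave_reflect_nonneg n ⟨hx.1.le, hx.2.trans ht.2⟩)
      ⟨0, ⟨le_rfl, ht.1.le⟩, ih (by simpa using ht.1.trans_le ht.2)⟩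

lemma monotoneOn_quarterWave (b : ℝ) (n : ℕ) (L : ℝ) :
    MonotoneOn (quarterWave b n L) (Set.Icc 0 L) := by
  intro s hs t ht hst
  cases n with
  | zero =>
    exact intervalIntegral.integral_mono_interval le_rfl hs.1 hst
      (.of_forall fun x => le_max_right _ _) (Continuous.intervalIntegrable (by fun_prop) _ _)
  | succ n =>
    refine intervalIntegral.integral_mono_interval le_rfl hs.1 hst ?_
      ((continuous_quarterWave_reflect b n L).intervalIntegrable _ _)
    filter_upwards [ae_restrict_mem measurableSet_Ioc] with x hx
    exact quarterWave_reflect_nonneg n ⟨hx.1.le, hx.2.trans ht.2⟩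

lemma quarterWave_le_of_le (b : ℝ) (n : ℕ) {L' t : ℝ} (hL : L ≤ L') (ht : t ∈ Set.Icc 0 L) :
    quarterWave b n L t ≤ quarterWave b n L' t := by
  induction n generalizing t with
  | zero => exact le_rfl
  | succ n ih =>
    refine intervalIntegral.integral_mono_on ht.1
      ((continuous_quarterWave_reflect b n L).intervalIntegrable _ _)
      ((continuous_quarterWave_reflect b n L').intervalIntegrable _ _) fun x hx => ?_
    have hx' : L - x ∈ Set.Icc 0 L := ⟨by linarith [hx.2, ht.2], by linarith [hx.1]⟩
    exact (ih hx').trans (monotoneOn_quarterWave b n L' ⟨hx'.1, by linarith [hx'.2]⟩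
      ⟨by linarith [hx'.1], by linarith [hx.1]⟩ (by linarith))

lemma strictMonoOn_quarterWave_self (hb : 0 < b) (n : ℕ) :
    StrictMonoOn (fun L => quarterWave b (n + 1) L L) (Set.Ici 0) := by
  intro L (hL : 0 ≤ L) L' _ hLL'
  have hint (x y : ℝ) := (continuous_quarterWave_reflect b n L').intervalIntegrable
    (μ := volume) x y
  have htail : 0 < ∫ x in L..L', quarterWave b n L' (L' - x) :=
    intervalIntegral.integral_pos hLL' (continuous_quarterWave_reflect b n L').continuousOn
      (fun x hx => quarterWave_reflect_nonneg n ⟨hL.trans hx.1.le, hx.2⟩)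
      ⟨L, ⟨le_rfl, hLL'.le⟩, quarterWave_pos hb n ⟨sub_pos.2 hLL', sub_le_self L' hL⟩⟩
  calc quarterWave b (n + 1) L L
      ≤ quarterWave b (n + 1) L' L := quarterWave_le_of_le b (n + 1) hLL'.le ⟨hL, le_rfl⟩
    _ < quarterWave b (n + 1) L' L + ∫ x in L..L', quarterWave b n L' (L' - x) :=
      lt_add_of_pos_right _ htail
    _ = quarterWave b (n + 1) L' L' :=
      intervalIntegral.integral_add_adjacent_intervals (hint 0 L) (hint L L')

lemma sub_mul_quarterWave_self_le (b : ℝ) (n : ℕ) {L' : ℝ} (hL : 0 ≤ L) (hLL' : L ≤ L') :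
    (L' - L) * quarterWave b n L L ≤ quarterWave b (n + 1) L' L' := by
  have hint (x y : ℝ) := (continuous_quarterWave_reflect b n L').intervalIntegrable
    (μ := volume) x y
  have hbelow (x : ℝ) (hx : x ∈ Set.Icc 0 (L' - L)) :
      quarterWave b n L L ≤ quarterWave b n L' (L' - x) :=
    (quarterWave_le_of_le b n hLL' ⟨hL, le_rfl⟩).trans
      (monotoneOn_quarterWave b n L' ⟨hL, hLL'⟩
        ⟨by linarith [hx.2], by linarith [hx.1]⟩ (by linarith [hx.2]))
  calc (L' - L) * quarterWave b n L L
      = ∫ _ in (0 : ℝ)..(L' - L), quarterWave b n L L := by simp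
    _ ≤ ∫ x in (0 : ℝ)..(L' - L), quarterWave b n L' (L' - x) :=
      intervalIntegral.integral_mono_on (sub_nonneg.2 hLL') (by simp) (hint _ _) hbelow
    _ = quarterWave b (n + 1) L' (L' - L) := rfl
    _ ≤ quarterWave b (n + 1) L' L' :=
      monotoneOn_quarterWave b (n + 1) L' ⟨by linarith, by linarith⟩ ⟨by linarith, le_rfl⟩
        (by linarith)

lemma tendsto_quarterWave_self (hb : 0 < b) (n : ℕ) :
    Tendsto (fun L => quarterWave b (n + 1) L L) atTop atTop := by
  have hlinear : Tendsto (fun L => (L - b) * quarterWave b n b b) atTop atTop :=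
    (tendsto_atTop_add_const_right _ (-b) tendsto_id).atTop_mul_const
      (quarterWave_pos hb n ⟨hb, le_rfl⟩)
  refine tendsto_atTop_mono' _ ?_ hlinear
  filter_upwards [eventually_ge_atTop b] with L hL
  exact sub_mul_quarterWave_self_le b n hb.le hL

lemma quarterWave_zero_self (hb : 0 ≤ b) (hL : b ≤ L) : quarterWave b 0 L L = b ^ 2 / 2 := by
  have hint (x y : ℝ) : IntervalIntegrable (fun x => max (b - x) 0) volume x y :=
    Continuous.intervalIntegrable (by fun_prop) x y
  have hleft : ∫ x in (0 : ℝ)..b, max (b - x) 0 = ∫ x in (0 : ℝ)..b, (b - x) := by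
    refine intervalIntegral.integral_congr fun x hx => ?_
    rw [Set.uIcc_of_le hb] at hx
    exact max_eq_left (sub_nonneg.2 hx.2)
  have hright : ∫ x in b..L, max (b - x) 0 = ∫ _ in b..L, (0 : ℝ) := by
    refine intervalIntegral.integral_congr fun x hx => ?_
    rw [Set.uIcc_of_le hL] at hx
    exact max_eq_right (sub_nonpos.2 hx.1)
  calc quarterWave b 0 L L
      = (∫ x in (0 : ℝ)..b, max (b - x) 0) + ∫ x in b..L, max (b - x) 0 :=
        (intervalIntegral.integral_add_adjacent_intervals (hint 0 b) (hint b L)).symm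
    _ = ∫ x in (0 : ℝ)..b, (b - x) := by
      rw [hleft, hright, intervalIntegral.integral_zero, add_zero]
    _ = b ^ 2 / 2 := by
      rw [intervalIntegral.integral_comp_sub_left (fun x => x)]
      simp

end QuarterWave

/-! ### Symmetries of the step function `ψ_0` -/

lemma antiperiodic_of_periodic_two_mul {φ : ℝ → ℝ} {T : ℝ} (hT : 0 < T)
    (hper : Function.Periodic φ (2 * T)) (hφ : ∀ t ∈ Set.Ico 0 T, φ (t + T) = -φ t) :
    Function.Antiperiodic φ T := by
  have hsum : Function.Periodic (fun t => φ (t + T) + φ t) T := fun t => by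
    change φ (t + T + T) + φ (t + T) = φ (t + T) + φ t
    rw [add_assoc, ← two_mul, hper, add_comm]
  intro t
  obtain ⟨u, hu, htu⟩ := hsum.exists_mem_Ico₀ hT t
  exact eq_neg_of_add_eq_zero_left (htu.trans (by rw [hφ u hu, neg_add_cancel]))

lemma odd_of_periodic {φ : ℝ → ℝ} {P : ℝ} (hP : 0 < P) (hper : Function.Periodic φ P)
    (hφ : ∀ t ∈ Set.Ico 0 P, φ (P - t) = -φ t) : Function.Odd φ := by
  have hsum : Function.Periodic (fun t => φ (-t) + φ t) P := fun t => by
    change φ (-(t + P)) + φ (t + P) = φ (-t) + φ t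
    rw [hper, neg_add', hper.sub_eq]
  intro t
  obtain ⟨u, hu, htu⟩ := hsum.exists_mem_Ico₀ hP t
  refine eq_neg_of_add_eq_zero_left (htu.trans ?_)
  rw [← hper (-u), neg_add_eq_sub, hφ u hu, neg_add_cancel]

section StepFunction

variable {a b c : ℝ}

lemma psiHalf_reflect (a b c t : ℝ) :
    psiHalf a b c (2 * (a + b + c) - t) = psiHalf a b c t := by
  unfold psiHalf
  rcases lt_trichotomy t (a + b + c) with h | rfl | h
  · rw [if_neg (by linarith), if_pos h.le, sub_sub_cancel]
  · simp only [two_mul, add_sub_cancel_right]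
  · rw [if_pos (by linarith), if_neg (by linarith)]

lemma psiHalf_of_nonpos (ha : 0 ≤ a) (hL : 0 < a + b + c) {t : ℝ} (ht : t ≤ 0) :
    psiHalf a b c t = 0 := by
  rw [psiHalf, if_pos (ht.trans hL.le), psiBase, if_pos (ht.trans ha)]

lemma psiHalf_of_two_mul_le (ha : 0 ≤ a) (hL : 0 < a + b + c) {t : ℝ}
    (ht : 2 * (a + b + c) ≤ t) : psiHalf a b c t = 0 := by
  rw [← psiHalf_reflect, psiHalf_of_nonpos ha hL (sub_nonpos.2 ht)]

lemma psiZero_periodic (hL : 0 < a + b + c) :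
    Function.Periodic (psiZero a b c) (4 * (a + b + c)) := by
  have hP : 4 * (a + b + c) ≠ 0 := by positivity
  intro t
  have hred : t + 4 * (a + b + c) - 4 * (a + b + c) * ⌊(t + 4 * (a + b + c)) / (4 * (a + b + c))⌋
      = t - 4 * (a + b + c) * ⌊t / (4 * (a + b + c))⌋ := by
    rw [add_div, div_self hP, Int.floor_add_one]
    push_cast
    ring
  rw [psiZero, hred, psiZero]

lemma psiZero_eq_psiHalf_sub_of_mem_Ico (ha : 0 ≤ a) (hL : 0 < a + b + c) {t : ℝ}
    (ht : t ∈ Set.Ico 0 (4 * (a + b + c))) :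
    psiZero a b c t = psiHalf a b c t - psiHalf a b c (t - 2 * (a + b + c)) := by
  have hfloor : ⌊t / (4 * (a + b + c))⌋ = 0 :=
    Int.floor_eq_zero_iff.2 ⟨div_nonneg ht.1 (by positivity), (div_lt_one (by positivity)).2 ht.2⟩
  rw [psiZero, hfloor, Int.cast_zero, mul_zero, sub_zero]
  split_ifs with h
  · rw [psiHalf_of_nonpos ha hL (sub_nonpos.2 h), sub_zero]
  · rw [psiHalf_of_two_mul_le ha hL (not_le.1 h).le, zero_sub, ← psiHalf_reflect]
    ring_nf

lemma psiZero_eq_psiHalf_sub (ha : 0 ≤ a) (hL : 0 < a + b + c) {t : ℝ}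
    (ht : t ∈ Set.Icc 0 (4 * (a + b + c))) :
    psiZero a b c t = psiHalf a b c t - psiHalf a b c (t - 2 * (a + b + c)) := by
  rcases ht.2.eq_or_lt with rfl | hlt
  · rw [(psiZero_periodic hL).eq, psiZero_eq_psiHalf_sub_of_mem_Ico ha hL ⟨le_rfl, by positivity⟩,
      psiHalf_of_nonpos ha hL le_rfl, psiHalf_of_nonpos ha hL (by linarith),
      psiHalf_of_two_mul_le ha hL (by linarith), psiHalf_of_two_mul_le ha hL (by linarith)]
  · exact psiZero_eq_psiHalf_sub_of_mem_Ico ha hL ⟨ht.1, hlt⟩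

lemma psiZero_antiperiodic (ha : 0 ≤ a) (hL : 0 < a + b + c) :
    Function.Antiperiodic (psiZero a b c) (2 * (a + b + c)) := by
  refine antiperiodic_of_periodic_two_mul (by positivity) ?_ fun t ht => ?_
  · simpa only [← mul_assoc, show (2 : ℝ) * 2 = 4 by norm_num] using psiZero_periodic hL
  · rw [psiZero_eq_psiHalf_sub ha hL ⟨by linarith [ht.1], by linarith [ht.2]⟩,
      psiZero_eq_psiHalf_sub ha hL ⟨ht.1, by linarith [ht.2]⟩, add_sub_cancel_right,
      psiHalf_of_two_mul_le ha hL (by linarith [ht.1]),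
      psiHalf_of_nonpos ha hL (t := t - 2 * (a + b + c)) (by linarith [ht.2]), zero_sub, sub_zero]

lemma psiZero_odd (ha : 0 ≤ a) (hL : 0 < a + b + c) : Function.Odd (psiZero a b c) := by
  refine odd_of_periodic (by positivity) (psiZero_periodic hL) fun t ht => ?_
  rw [psiZero_eq_psiHalf_sub ha hL ⟨by linarith [ht.2], by linarith [ht.1]⟩,
    psiZero_eq_psiHalf_sub ha hL ⟨ht.1, ht.2.le⟩, neg_sub,
    ← psiHalf_reflect a b c (t - 2 * (a + b + c)), ← psiHalf_reflect a b c t]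
  ring_nf

lemma psiZero_eq_psiBase (ha : 0 ≤ a) (hL : 0 < a + b + c) {t : ℝ}
    (ht : t ∈ Set.Icc 0 (a + b + c)) : psiZero a b c t = psiBase a b t := by
  rw [psiZero_eq_psiHalf_sub ha hL ⟨ht.1, by linarith [ht.2]⟩,
    psiHalf_of_nonpos ha hL (t := t - 2 * (a + b + c)) (by linarith [ht.1, ht.2]), sub_zero,
    psiHalf, if_pos ht.2]

lemma abs_psiZero_le_one (a b c t : ℝ) : |psiZero a b c t| ≤ 1 := by
  unfold psiZero psiHalf psiBase
  split_ifs <;> simp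

lemma measurable_psiZero (a b c : ℝ) : Measurable (psiZero a b c) := by
  have hbase : Measurable (psiBase a b) :=
    .ite measurableSet_Iic measurable_const
      (.ite measurableSet_Iic measurable_const measurable_const)
  have hhalf : Measurable (psiHalf a b c) :=
    .ite measurableSet_Iic hbase (hbase.comp (by fun_prop))
  have hred : Measurable fun t : ℝ => t - 4 * (a + b + c) * (⌊t / (4 * (a + b + c))⌋ : ℝ) := by
    fun_prop
  exact .ite (measurableSet_le hred measurable_const) (hhalf.comp hred)
    (hhalf.comp (measurable_const.sub hred)).neg

end StepFunction

/-! ### Periodic antiderivatives with zero mean -/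

/-- The antiderivative of `φ` with zero mean over `[0, P]`, normalised as in the recursion
defining `psi`. It is `P`-periodic when `φ` is `P`-periodic with zero mean. -/
noncomputable def zeroMeanPrimitive (P : ℝ) (φ : ℝ → ℝ) (t : ℝ) : ℝ :=
  (∫ x in (0 : ℝ)..t, φ x) - (1 / P) * ∫ x in (0 : ℝ)..P, ∫ u in (0 : ℝ)..x, φ u

section ZeroMeanPrimitive

variable {φ : ℝ → ℝ} {L : ℝ}

lemma continuous_zeroMeanPrimitive (hi : ∀ x y, IntervalIntegrable φ volume x y) (P : ℝ) :
    Continuous (zeroMeanPrimitive P φ) :=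
  (intervalIntegral.continuous_primitive hi 0).sub continuous_const

lemma zeroMeanPrimitive_sub (hi : ∀ x y, IntervalIntegrable φ volume x y) (P s t : ℝ) :
    zeroMeanPrimitive P φ t - zeroMeanPrimitive P φ s = ∫ x in s..t, φ x := by
  rw [zeroMeanPrimitive, zeroMeanPrimitive, sub_sub_sub_cancel_right,
    intervalIntegral.integral_interval_sub_left (hi _ _) (hi _ _)]

lemma lipschitzWith_zeroMeanPrimitive (hi : ∀ x y, IntervalIntegrable φ volume x y)
    {K : NNReal} (hK : ∀ t, |φ t| ≤ K) (P : ℝ) : LipschitzWith K (zeroMeanPrimitive P φ) :=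
  .of_dist_le_mul fun x y => by
    rw [Real.dist_eq, zeroMeanPrimitive_sub hi]
    exact intervalIntegral.norm_integral_le_of_norm_le_const (f := φ) fun t _ => hK t

lemma hasDerivAt_zeroMeanPrimitive {t : ℝ} (hi : IntervalIntegrable φ volume 0 t)
    (hmeas : StronglyMeasurable φ) (hφ : ContinuousAt φ t) (P : ℝ) :
    HasDerivAt (zeroMeanPrimitive P φ) (φ t) t :=
  (intervalIntegral.integral_hasDerivAt_right hi hmeas.stronglyMeasurableAtFilter hφ).sub_const _

lemma integral_neg_of_even (hφ : Function.Even φ) (t : ℝ) :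
    ∫ x in (0 : ℝ)..-t, φ x = -∫ x in (0 : ℝ)..t, φ x := by
  have := intervalIntegral.integral_comp_neg (a := 0) (b := t) φ
  rw [neg_zero] at this
  rw [intervalIntegral.integral_symm, ← this]
  simp only [hφ _]

lemma integral_neg_of_odd (hφ : Function.Odd φ) (t : ℝ) :
    ∫ x in (0 : ℝ)..-t, φ x = ∫ x in (0 : ℝ)..t, φ x := by
  have := intervalIntegral.integral_comp_neg (a := 0) (b := t) φ
  rw [neg_zero] at this
  rw [intervalIntegral.integral_symm, ← this]
  simp only [hφ _, intervalIntegral.integral_neg, neg_neg]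

lemma integral_add_antiperiod {T : ℝ} (hi : ∀ x y, IntervalIntegrable φ volume x y)
    (hT : Function.Antiperiodic φ T) (t : ℝ) :
    ∫ x in (0 : ℝ)..(t + T), φ x = (∫ x in (0 : ℝ)..T, φ x) - ∫ x in (0 : ℝ)..t, φ x := by
  have hshift := intervalIntegral.integral_comp_add_right (a := 0) (b := t) φ T
  simp only [hT _, intervalIntegral.integral_neg, zero_add] at hshift
  rw [← intervalIntegral.integral_add_adjacent_intervals (hi 0 T) (hi T (t + T)), ← hshift,
    sub_eq_add_neg]

lemma zeroMeanPrimitive_eq_of_antiperiodic (hL : L ≠ 0)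
    (hi : ∀ x y, IntervalIntegrable φ volume x y) (hφ : Function.Antiperiodic φ (2 * L)) (t : ℝ) :
    zeroMeanPrimitive (4 * L) φ t
      = (∫ x in (0 : ℝ)..t, φ x) - (∫ x in (0 : ℝ)..(2 * L), φ x) / 2 := by
  set F : ℝ → ℝ := fun x => ∫ u in (0 : ℝ)..x, φ u
  have hFi (x y : ℝ) : IntervalIntegrable F volume x y :=
    (intervalIntegral.continuous_primitive hi 0).intervalIntegrable x y
  have hsecond : ∫ x in (2 * L)..(4 * L), F x = 2 * L * F (2 * L) - ∫ x in (0 : ℝ)..(2 * L), F x :=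
    calc ∫ x in (2 * L)..(4 * L), F x
        = ∫ x in (0 : ℝ)..(2 * L), F (x + 2 * L) := by
          rw [intervalIntegral.integral_comp_add_right F]
          ring_nf
      _ = ∫ x in (0 : ℝ)..(2 * L), (F (2 * L) - F x) := by
          simp only [F, integral_add_antiperiod hi hφ]
      _ = 2 * L * F (2 * L) - ∫ x in (0 : ℝ)..(2 * L), F x := by
          rw [intervalIntegral.integral_sub (by simp) (hFi _ _), intervalIntegral.integral_const,
            smul_eq_mul, sub_zero]
  have hmean : ∫ x in (0 : ℝ)..(4 * L), F x = 2 * L * F (2 * L) := by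
    rw [← intervalIntegral.integral_add_adjacent_intervals (hFi 0 (2 * L)) (hFi (2 * L) (4 * L)),
      hsecond, add_sub_cancel]
  rw [zeroMeanPrimitive, hmean]
  field_simp
  ring

lemma zeroMeanPrimitive_antiperiodic (hL : L ≠ 0) (hi : ∀ x y, IntervalIntegrable φ volume x y)
    (hφ : Function.Antiperiodic φ (2 * L)) :
    Function.Antiperiodic (zeroMeanPrimitive (4 * L) φ) (2 * L) := fun t => by
  rw [zeroMeanPrimitive_eq_of_antiperiodic hL hi hφ, zeroMeanPrimitive_eq_of_antiperiodic hL hi hφ,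
    integral_add_antiperiod hi hφ]
  ring

lemma zeroMeanPrimitive_eq_of_even (hL : L ≠ 0) (hi : ∀ x y, IntervalIntegrable φ volume x y)
    (hφ : Function.Antiperiodic φ (2 * L)) (heven : Function.Even φ) (t : ℝ) :
    zeroMeanPrimitive (4 * L) φ t = ∫ x in (0 : ℝ)..t, φ x := by
  have hhalf := integral_add_antiperiod hi hφ (-L)
  rw [integral_neg_of_even heven, show -L + 2 * L = L by ring] at hhalf
  rw [zeroMeanPrimitive_eq_of_antiperiodic hL hi hφ]
  linarith

lemma zeroMeanPrimitive_eq_of_odd (hL : L ≠ 0) (hi : ∀ x y, IntervalIntegrable φ volume x y)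
    (hφ : Function.Antiperiodic φ (2 * L)) (hodd : Function.Odd φ) (t : ℝ) :
    zeroMeanPrimitive (4 * L) φ t = ∫ x in L..t, φ x := by
  have hhalf := integral_add_antiperiod hi hφ (-L)
  rw [integral_neg_of_odd hodd, show -L + 2 * L = L by ring] at hhalf
  rw [zeroMeanPrimitive_eq_of_antiperiodic hL hi hφ,
    ← intervalIntegral.integral_interval_sub_left (hi 0 t) (hi 0 L)]
  linarith

lemma zeroMeanPrimitive_odd_of_even (hL : L ≠ 0) (hi : ∀ x y, IntervalIntegrable φ volume x y)
    (hφ : Function.Antiperiodic φ (2 * L)) (heven : Function.Even φ) :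
    Function.Odd (zeroMeanPrimitive (4 * L) φ) := fun t => by
  rw [zeroMeanPrimitive_eq_of_even hL hi hφ heven, zeroMeanPrimitive_eq_of_even hL hi hφ heven,
    integral_neg_of_even heven]

lemma zeroMeanPrimitive_even_of_odd (hodd : Function.Odd φ) (P : ℝ) :
    Function.Even (zeroMeanPrimitive P φ) := fun t => by
  rw [zeroMeanPrimitive, zeroMeanPrimitive, integral_neg_of_odd hodd]

end ZeroMeanPrimitive

/-! ### The splines `ψ_n` -/

lemma intervalIntegrable_psi (n : ℕ) (a b c x y : ℝ) :
    IntervalIntegrable (psi n a b c) volume x y := by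
  induction n generalizing x y with
  | zero =>
    exact (intervalIntegrable_const (c := (1 : ℝ))).mono_fun
      (measurable_psiZero a b c).aestronglyMeasurable
      (.of_forall fun t => by simpa [psi] using abs_psiZero_le_one a b c t)
  | succ n ih => exact (continuous_zeroMeanPrimitive ih _).intervalIntegrable x y

lemma continuous_psi_succ (n : ℕ) (a b c : ℝ) : Continuous (psi (n + 1) a b c) :=
  continuous_zeroMeanPrimitive (intervalIntegrable_psi n a b c) _

lemma hasDerivAt_psi (n : ℕ) (a b c t : ℝ) :
    HasDerivAt (psi (n + 2) a b c) (psi (n + 1) a b c t) t :=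
  have hcont := continuous_psi_succ n a b c
  hasDerivAt_zeroMeanPrimitive (hcont.intervalIntegrable 0 t) hcont.stronglyMeasurable
    hcont.continuousAt _

lemma iteratedDeriv_psi (n s : ℕ) (a b c : ℝ) :
    iteratedDeriv s (psi (n + 1 + s) a b c) = psi (n + 1) a b c := by
  induction s generalizing n with
  | zero => exact iteratedDeriv_zero
  | succ s ih =>
    rw [iteratedDeriv_succ, show n + 1 + (s + 1) = n + 1 + 1 + s by ring, ih (n + 1)]
    exact funext fun t => (hasDerivAt_psi n a b c t).deriv

section PsiSymmetry

variable {a b c : ℝ}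

lemma psi_antiperiodic (ha : 0 ≤ a) (hL : 0 < a + b + c) (n : ℕ) :
    Function.Antiperiodic (psi n a b c) (2 * (a + b + c)) := by
  induction n with
  | zero => exact psiZero_antiperiodic ha hL
  | succ n ih => exact zeroMeanPrimitive_antiperiodic hL.ne' (intervalIntegrable_psi n a b c) ih

lemma psi_odd (ha : 0 ≤ a) (hL : 0 < a + b + c) (m : ℕ) : Function.Odd (psi (2 * m) a b c) := by
  induction m with
  | zero => exact psiZero_odd ha hL
  | succ m ih =>
    exact zeroMeanPrimitive_odd_of_even hL.ne' (intervalIntegrable_psi _ a b c)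
      (psi_antiperiodic ha hL _) (zeroMeanPrimitive_even_of_odd ih _)

lemma psi_even (ha : 0 ≤ a) (hL : 0 < a + b + c) (m : ℕ) :
    Function.Even (psi (2 * m + 1) a b c) :=
  zeroMeanPrimitive_even_of_odd (psi_odd ha hL m) _

lemma psi_two_mul_add_one (ha : 0 ≤ a) (hL : 0 < a + b + c) (m : ℕ) (t : ℝ) :
    psi (2 * m + 1) a b c t = ∫ x in (a + b + c)..t, psi (2 * m) a b c x :=
  zeroMeanPrimitive_eq_of_odd hL.ne' (intervalIntegrable_psi _ a b c)
    (psi_antiperiodic ha hL _) (psi_odd ha hL m) t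

lemma psi_two_mul_add_two (ha : 0 ≤ a) (hL : 0 < a + b + c) (m : ℕ) (t : ℝ) :
    psi (2 * m + 2) a b c t = ∫ x in (0 : ℝ)..t, psi (2 * m + 1) a b c x :=
  zeroMeanPrimitive_eq_of_even hL.ne' (intervalIntegrable_psi _ a b c)
    (psi_antiperiodic ha hL _) (psi_even ha hL m) t

lemma abs_psi_even (ha : 0 ≤ a) (hL : 0 < a + b + c) (n : ℕ) :
    Function.Even fun t => |psi n a b c t| := fun t => by
  rcases Nat.even_or_odd' n with ⟨m, rfl | rfl⟩
  · simp only [psi_odd ha hL m t, abs_neg]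
  · simp only [psi_even ha hL m t]

lemma abs_psi_le_of_forall_mem_Icc (ha : 0 ≤ a) (hL : 0 < a + b + c) {n : ℕ} {B : ℝ}
    (hB : ∀ t ∈ Set.Icc 0 (a + b + c), |psi n a b c t| ≤ B) (t : ℝ) : |psi n a b c t| ≤ B := by
  have hper : Function.Periodic (fun t => |psi n a b c t|) (2 * (a + b + c)) := fun t => by
    simp only [psi_antiperiodic ha hL n t, abs_neg]
  obtain ⟨u, ⟨hu0, hu1⟩, htu⟩ := hper.exists_mem_Ico₀ (by positivity) t
  refine htu.trans_le ?_
  rcases le_total u (a + b + c) with hu | hu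
  · exact hB u ⟨hu0, hu⟩
  · have hreflect : |psi n a b c (-u + 2 * (a + b + c))| = |psi n a b c u| :=
      (hper (-u)).trans (abs_psi_even ha hL n u)
    exact hreflect ▸ hB _ ⟨by linarith, by linarith⟩

end PsiSymmetry

lemma psiZero_eq_one {a b c t : ℝ} (ha : 0 ≤ a) (hc : 0 ≤ c) (ht : t ∈ Set.Ioc a (a + b)) :
    psiZero a b c t = 1 := by
  have hb : 0 < b := by linarith [ht.1, ht.2]
  rw [psiZero_eq_psiBase ha (by positivity) ⟨by linarith [ht.1], by linarith [ht.2]⟩, psiBase,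
    if_neg (not_le.2 ht.1), if_pos ht.2]

lemma psiZero_eq_zero {a b c t : ℝ} (ha : 0 ≤ a) (hb : 0 ≤ b)
    (ht : t ∈ Set.Ioc (a + b) (a + b + c)) : psiZero a b c t = 0 := by
  have hc : 0 < c := by linarith [ht.1, ht.2]
  rw [psiZero_eq_psiBase ha (by positivity) ⟨by linarith [ht.1], ht.2⟩, psiBase,
    if_neg (by linarith [ht.1]), if_neg (not_le.2 ht.1)]

lemma hasDerivAt_psi_one_midpoint {a b c : ℝ} (ha : 0 ≤ a) (hb : 0 < b) (hc : 0 ≤ c) :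
    HasDerivAt (psi 1 a b c) 1 (a + b / 2) := by
  have hmid : Set.Ioo a (a + b) ∈ nhds (a + b / 2) := Ioo_mem_nhds (by linarith) (by linarith)
  have hone : psiZero a b c =ᶠ[nhds (a + b / 2)] fun _ => 1 := by
    filter_upwards [hmid] with t ht
    exact psiZero_eq_one ha hc (Set.Ioo_subset_Ioc_self ht)
  exact hone.eq_of_nhds ▸ hasDerivAt_zeroMeanPrimitive (intervalIntegrable_psi 0 a b c _ _)
    (measurable_psiZero a b c).stronglyMeasurable (continuousAt_const.congr hone.symm) _

lemma M_succ_psi_succ {a b c : ℝ} (ha : 0 ≤ a) (hb : 0 < b) (hc : 0 ≤ c) (s : ℕ) :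
    M (s + 1) (psi (s + 1) a b c) = 1 := by
  have hlip : LipschitzWith 1 (psi 1 a b c) :=
    lipschitzWith_zeroMeanPrimitive (intervalIntegrable_psi 0 a b c)
      (by simpa [psi] using abs_psiZero_le_one a b c) _
  rw [M, iteratedDeriv_succ, add_comm s 1, ← zero_add 1, iteratedDeriv_psi]
  refine unif_eq_of_forall_abs_le (t₀ := a + b / 2) (fun t => norm_deriv_le_of_lipschitz hlip) ?_
  rw [zero_add, (hasDerivAt_psi_one_midpoint ha hb hc).deriv, abs_one]

section PsiQuarterWave

variable {b c : ℝ}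

lemma psi_one_eq_neg_max (hb : 0 < b) (hc : 0 ≤ c) {t : ℝ} (ht : t ∈ Set.Icc 0 (b + c)) :
    psi 1 0 b c t = -max (b - t) 0 := by
  have hzero (s : ℝ) (hs : s ∈ Set.Icc b (b + c)) : ∫ x in s..(b + c), psi 0 0 b c x = 0 := by
    refine intervalIntegral.integral_zero_ae (.of_forall fun x hx => ?_)
    rw [Set.uIoc_of_le hs.2] at hx
    exact psiZero_eq_zero le_rfl hb.le ⟨by linarith [hs.1, hx.1], by linarith [hx.2]⟩
  have hone (h : t ≤ b) : ∫ x in t..b, psi 0 0 b c x = b - t := by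
    rw [intervalIntegral.integral_congr_ae (g := fun _ => (1 : ℝ)) (.of_forall fun x hx => ?_),
      intervalIntegral.integral_const, smul_eq_mul, mul_one]
    rw [Set.uIoc_of_le h] at hx
    exact psiZero_eq_one le_rfl hc ⟨by linarith [ht.1, hx.1], by linarith [hx.2]⟩
  have hi := intervalIntegrable_psi 0 0 b c
  rw [show psi 1 0 b c t = _ from psi_two_mul_add_one le_rfl (by linarith) 0 t,
    intervalIntegral.integral_symm, zero_add, neg_inj]
  rcases le_total b t with h | h
  · rw [max_eq_right (sub_nonpos.2 h)]
    exact hzero t ⟨h, ht.2⟩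
  · rw [max_eq_left (sub_nonneg.2 h),
      ← intervalIntegral.integral_add_adjacent_intervals (hi t b) (hi b (b + c)),
      hzero b ⟨le_rfl, by linarith⟩, add_zero, hone h]

lemma psi_odd_index_eq_quarterWave (hL : 0 < b + c) {m n : ℕ} {σ : ℝ}
    (hψ : ∀ t ∈ Set.Icc 0 (b + c), psi (2 * m) 0 b c t = σ * quarterWave b n (b + c) t) :
    ∀ t ∈ Set.Icc 0 (b + c),
      psi (2 * m + 1) 0 b c t = -σ * quarterWave b (n + 1) (b + c) (b + c - t) := by
  intro t ht
  calc psi (2 * m + 1) 0 b c t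
      = -∫ x in t..(b + c), psi (2 * m) 0 b c x := by
        rw [psi_two_mul_add_one le_rfl (by linarith), intervalIntegral.integral_symm, zero_add]
    _ = -∫ x in t..(b + c), σ * quarterWave b n (b + c) x := by
        congr 1
        refine intervalIntegral.integral_congr fun x hx => ?_
        rw [Set.uIcc_of_le ht.2] at hx
        exact hψ x ⟨ht.1.trans hx.1, hx.2⟩
    _ = -σ * quarterWave b (n + 1) (b + c) (b + c - t) := by
        simp only [quarterWave]
        rw [intervalIntegral.integral_comp_sub_left (quarterWave b n (b + c)), sub_sub_cancel,
          sub_zero, intervalIntegral.integral_const_mul, neg_mul]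

lemma psi_even_index_eq_quarterWave (hL : 0 < b + c) {m n : ℕ} {σ : ℝ}
    (hψ : ∀ t ∈ Set.Icc 0 (b + c),
      psi (2 * m + 1) 0 b c t = σ * quarterWave b n (b + c) (b + c - t)) :
    ∀ t ∈ Set.Icc 0 (b + c), psi (2 * m + 2) 0 b c t = σ * quarterWave b (n + 1) (b + c) t := by
  intro t ht
  rw [psi_two_mul_add_two le_rfl (by linarith), quarterWave,
    ← intervalIntegral.integral_const_mul]
  refine intervalIntegral.integral_congr fun x hx => ?_
  rw [Set.uIcc_of_le ht.1] at hx
  exact hψ x ⟨hx.1, hx.2.trans ht.2⟩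

lemma psi_two_mul_add_two_eq_quarterWave (hb : 0 < b) (hc : 0 ≤ c) (m : ℕ) :
    ∀ t ∈ Set.Icc 0 (b + c),
      psi (2 * m + 2) 0 b c t = (-1) ^ (m + 1) * quarterWave b (2 * m) (b + c) t := by
  have hL : 0 < b + c := by positivity
  induction m with
  | zero =>
    intro t ht
    rw [psi_two_mul_add_two le_rfl (by linarith), zero_add, pow_one, neg_one_mul, quarterWave,
      ← intervalIntegral.integral_neg]
    refine intervalIntegral.integral_congr fun x hx => ?_
    rw [Set.uIcc_of_le ht.1] at hx
    exact psi_one_eq_neg_max hb hc ⟨hx.1, hx.2.trans ht.2⟩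
  | succ m ih =>
    intro t ht
    rw [psi_even_index_eq_quarterWave hL (psi_odd_index_eq_quarterWave (m := m + 1) hL ih) t ht,
      pow_succ _ (m + 1), mul_neg_one]
    rfl

lemma psi_two_mul_add_three_eq_quarterWave (hb : 0 < b) (hc : 0 ≤ c) (m : ℕ) {t : ℝ}
    (ht : t ∈ Set.Icc 0 (b + c)) :
    psi (2 * m + 3) 0 b c t = (-1) ^ m * quarterWave b (2 * m + 1) (b + c) (b + c - t) := by
  rw [show psi (2 * m + 3) 0 b c t = _ from psi_odd_index_eq_quarterWave (m := m + 1)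
    (by positivity) (psi_two_mul_add_two_eq_quarterWave hb hc m) t ht,
    pow_succ, mul_neg_one, neg_neg]

lemma abs_neg_one_pow_mul_quarterWave (m n : ℕ) {L t : ℝ} (ht : t ∈ Set.Icc 0 L) :
    |(-1) ^ m * quarterWave b n L t| = quarterWave b n L t := by
  rw [abs_mul, abs_neg_one_pow, one_mul, abs_of_nonneg (quarterWave_nonneg n ht)]

lemma unif_psi (hb : 0 < b) (hc : 0 ≤ c) (n : ℕ) :
    unif (psi (n + 2) 0 b c) = quarterWave b n (b + c) (b + c) := by
  have hL : 0 < b + c := by positivity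
  have hright : b + c ∈ Set.Icc 0 (b + c) := ⟨hL.le, le_rfl⟩
  rcases Nat.even_or_odd' n with ⟨m, rfl | rfl⟩
  · have habs (t : ℝ) (ht : t ∈ Set.Icc 0 (b + c)) :
        |psi (2 * m + 2) 0 b c t| = quarterWave b (2 * m) (b + c) t := by
      rw [psi_two_mul_add_two_eq_quarterWave hb hc m t ht, abs_neg_one_pow_mul_quarterWave _ _ ht]
    refine unif_eq_of_forall_abs_le
      (abs_psi_le_of_forall_mem_Icc le_rfl (by linarith) fun t ht => ?_) (habs (b + c) hright)
    rw [zero_add] at ht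
    exact (habs t ht).trans_le (monotoneOn_quarterWave b _ _ ht hright ht.2)
  · have hreflect {t : ℝ} (ht : t ∈ Set.Icc 0 (b + c)) : b + c - t ∈ Set.Icc 0 (b + c) :=
      ⟨sub_nonneg.2 ht.2, sub_le_self _ ht.1⟩
    have habs (t : ℝ) (ht : t ∈ Set.Icc 0 (b + c)) :
        |psi (2 * m + 3) 0 b c t| = quarterWave b (2 * m + 1) (b + c) (b + c - t) := by
      rw [psi_two_mul_add_three_eq_quarterWave hb hc m ht,
        abs_neg_one_pow_mul_quarterWave _ _ (hreflect ht)]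
    refine unif_eq_of_forall_abs_le
      (abs_psi_le_of_forall_mem_Icc le_rfl (by linarith) fun t ht => ?_)
      ((habs 0 ⟨le_rfl, hL.le⟩).trans (by rw [sub_zero]))
    rw [zero_add] at ht
    exact (habs t ht).trans_le
      (monotoneOn_quarterWave b _ _ (hreflect ht) hright (hreflect ht).2)

lemma M_psi_eq_quarterWave (hb : 0 < b) (hc : 0 ≤ c) (n s : ℕ) :
    M s (psi (n + 2 + s) 0 b c) = quarterWave b n (b + c) (b + c) := by
  rw [M, iteratedDeriv_psi (n + 1) s, unif_psi hb hc]

lemma M_psi_add_two (hb : 0 < b) (hc : 0 ≤ c) (s : ℕ) : M s (psi (s + 2) 0 b c) = b ^ 2 / 2 := by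
  rw [add_comm, ← zero_add 2, M_psi_eq_quarterWave hb hc 0 s,
    quarterWave_zero_self hb.le (le_add_of_nonneg_right hc)]

lemma continuousOn_M_psi (hb : 0 < b) (n s : ℕ) :
    ContinuousOn (fun c => M s (psi (n + 2 + s) 0 b c)) (Set.Ici 0) :=
  ((continuous_quarterWave_self b n).comp (continuous_const_add b)).continuousOn.congr
    fun _ hc => M_psi_eq_quarterWave hb hc n s

lemma strictMonoOn_M_psi (hb : 0 < b) (n s : ℕ) :
    StrictMonoOn (fun c => M s (psi (n + 3 + s) 0 b c)) (Set.Ici 0) := by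
  intro c (hc : 0 ≤ c) c' (hc' : 0 ≤ c') hcc'
  have h := strictMonoOn_quarterWave_self hb n (add_nonneg hb.le hc) (add_nonneg hb.le hc')
    (add_lt_add_right hcc' b)
  simpa only [← M_psi_eq_quarterWave hb hc (n + 1) s, ← M_psi_eq_quarterWave hb hc' (n + 1) s]
    using h

lemma tendsto_M_psi_atTop (hb : 0 < b) (n s : ℕ) :
    Tendsto (fun c => M s (psi (n + 3 + s) 0 b c)) atTop atTop := by
  refine ((tendsto_quarterWave_self hb n).comp
    (tendsto_atTop_add_const_left _ b tendsto_id)).congr' ?_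
  filter_upwards [eventually_ge_atTop 0] with c hc
  exact (M_psi_eq_quarterWave hb hc (n + 1) s).symm

end PsiQuarterWave

theorem stmt12_general (r : ℕ) (hr : 2 ≤ r) (f : ℝ → ℝ) (hf : MemL r f)
    (hnc : ∃ x y : ℝ, f x ≠ f y)
    (α b : ℝ) (hα : α = M r f) (hb : b = Real.sqrt (2 * M (r - 2) f / M r f))
    (g : ℝ → ℝ → ℝ) (hg : g = fun β t => α * psi r 0 b β t) :
    0 < α ∧ 0 < b ∧
    (∀ β : ℝ, 0 ≤ β → M (r - 2) (g β) = M (r - 2) f ∧ M r (g β) = M r f) ∧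
    (∀ s : ℕ, s < r - 2 →
      ContinuousOn (fun β => M s (g β)) (Set.Ici 0) ∧
      StrictMonoOn (fun β => M s (g β)) (Set.Ici 0) ∧
      Filter.Tendsto (fun β => M s (g β)) Filter.atTop Filter.atTop) := by
  have hMr : 0 < M r f := hf.M_pos hnc le_rfl
  have hMr2 : 0 < M (r - 2) f := hf.M_pos hnc (Nat.sub_le r 2)
  have hα0 : 0 < α := hα ▸ hMr
  have hb0 : 0 < b := hb ▸ Real.sqrt_pos.2 (by positivity)
  have hαb : α * (b ^ 2 / 2) = M (r - 2) f := by
    rw [hb, hα, Real.sq_sqrt (by positivity)]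
    field_simp
  have hM (s : ℕ) (β : ℝ) : M s (g β) = α * M s (psi r 0 b β) := hg ▸ M_const_mul hα0.le s _
  simp only [hM]
  refine ⟨hα0, hb0, fun β hβ => ⟨?_, ?_⟩, fun s hs => ?_⟩
  · obtain ⟨k, rfl⟩ := Nat.exists_eq_add_of_le' hr
    rw [← hαb, Nat.add_sub_cancel, M_psi_add_two hb0 hβ]
  · obtain ⟨k, rfl⟩ := Nat.exists_eq_add_of_le' hr
    rw [M_succ_psi_succ le_rfl hb0 hβ, mul_one, hα]
  · obtain ⟨n, rfl⟩ : ∃ n, r = n + 3 + s := ⟨r - 3 - s, by omega⟩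
    exact ⟨continuousOn_const.mul (continuousOn_M_psi hb0 (n + 1) s),
      (strictMono_mul_left_of_pos hα0).comp_strictMonoOn (strictMonoOn_M_psi hb0 n s),
      (tendsto_M_psi_atTop hb0 n s).const_mul_atTop hα0⟩

/-- The one-parameter spline family for `𝐤 = (0,k,r-2,r)`: for non-constant
`f ∈ L^r_{∞,∞}`, the splines `g_β = α ψ_r(0,b,β)` with `α = M_r(f)` and
`b = √(2 M_{r-2}(f)/M_r(f))` match `M_{r-2}` and `M_r` of `f`, while for each
`s < r-2` the map `β ↦ M_s(g_β)` continuously increases to `∞`. -/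
theorem stmt12 (r : ℕ) (hr : 4 ≤ r) (f : ℝ → ℝ) (hf : MemL r f)
    (hnc : ∃ x y : ℝ, f x ≠ f y)
    (α b : ℝ) (hα : α = M r f) (hb : b = Real.sqrt (2 * M (r - 2) f / M r f))
    (g : ℝ → ℝ → ℝ) (hg : g = fun β t => α * psi r 0 b β t) :
    0 < α ∧ 0 < b ∧
    (∀ β : ℝ, 0 ≤ β → M (r - 2) (g β) = M (r - 2) f ∧ M r (g β) = M r f) ∧
    (∀ s : ℕ, s < r - 2 →
      ContinuousOn (fun β => M s (g β)) (Set.Ici 0) ∧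
      StrictMonoOn (fun β => M s (g β)) (Set.Ici 0) ∧
      Filter.Tendsto (fun β => M s (g β)) Filter.atTop Filter.atTop) :=
  stmt12_general r (by omega) f hf hnc α b hα hb g hg
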